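/- arXiv:1402.2371 — 4 statements merged into one kernel-verified Lean document; each statement's English description precedes it below -/
import Mathlib

section
/- Let 𝔽 be an algebraically closed field and let X ⊆ ℙⁿ(𝔽) be an irreducible nondegenerate projective variety. Let r_max be the maximum value of X-rank over nonzero vectors of 𝔽^{n+1} and let r_gen be the generic X-rank. Then r_max ≤ 2·r_gen. -/
/-!
Two nonempty Zariski open subsets `U`, `V` of affine space satisfy `U + V = univ`: for a vector `v`
the reflection `x ↦ v - x` pulls `V` back to another nonempty open set, which meets `U` because
affine space over an infinite domain is irreducible. Taking `U = V` to be an open set of vectors of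
generic rank, every vector is a sum of two vectors of generic rank, and the rank is subadditive.
-/

open MvPolynomial

/-- The zero locus in affine space `σ → F` of a set `I` of polynomials. -/
def zLocus {F : Type*} [CommSemiring F] {σ : Type*} (I : Set (MvPolynomial σ F)) :
    Set (σ → F) :=
  {x | ∀ p ∈ I, eval x p = 0}

/-- A subset of affine space is Zariski closed if it is the zero locus of a set of
polynomials. -/
def IsZClosed {F : Type*} [CommSemiring F] {σ : Type*} (S : Set (σ → F)) : Prop :=
  ∃ I : Set (MvPolynomial σ F), S = zLocus I

/-- Zariski open subsets of affine space. -/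
def IsZOpen {F : Type*} [CommSemiring F] {σ : Type*} (S : Set (σ → F)) : Prop :=
  IsZClosed Sᶜ

/-- Zariski dense subsets of affine space. -/
def IsZDense {F : Type*} [CommSemiring F] {σ : Type*} (S : Set (σ → F)) : Prop :=
  ∀ C : Set (σ → F), IsZClosed C → S ⊆ C → C = Set.univ

/-- Irreducibility with respect to the Zariski topology. -/
def IsZIrreducible {F : Type*} [CommSemiring F] {σ : Type*} (S : Set (σ → F)) : Prop :=
  S.Nonempty ∧ ∀ C₁ C₂ : Set (σ → F), IsZClosed C₁ → IsZClosed C₂ →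
    S ⊆ C₁ ∪ C₂ → (S ⊆ C₁ ∨ S ⊆ C₂)

/-- An affine cone: a subset closed under scalar multiplication. -/
def IsCone {F : Type*} [CommSemiring F] {σ : Type*} (S : Set (σ → F)) : Prop :=
  ∀ (c : F), ∀ x ∈ S, c • x ∈ S

/-- The set of vectors expressible as a sum of exactly `r` elements of `S`. -/
def sumsOf {F : Type*} [CommSemiring F] {σ : Type*} (S : Set (σ → F)) (r : ℕ) :
    Set (σ → F) :=
  {v | ∃ f : Fin r → (σ → F), (∀ i, f i ∈ S) ∧ ∑ i, f i = v}

/-- The `X`-rank of a vector with respect to the affine cone `S`: the least number of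
elements of `S` summing to it (`⊤` if there is no such decomposition). -/
noncomputable def xRank {F : Type*} [CommSemiring F] {σ : Type*} (S : Set (σ → F))
    (v : σ → F) : ℕ∞ :=
  sInf {r : ℕ∞ | ∃ s : ℕ, r = s ∧ v ∈ sumsOf S s}

/-- The Zariski closure of a subset of affine space. -/
def zClosure {F : Type*} [CommSemiring F] {σ : Type*} (S : Set (σ → F)) : Set (σ → F) :=
  ⋂₀ {C : Set (σ → F) | IsZClosed C ∧ S ⊆ C}

/-- The (affine cone over the) `r`-th secant variety: the Zariski closure of the set of
points of `X`-rank at most `r`. -/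
noncomputable def secantCone {F : Type*} [CommSemiring F] {σ : Type*}
    (Xhat : Set (σ → F)) (r : ℕ) : Set (σ → F) :=
  zClosure {v | xRank Xhat v ≤ (r : ℕ∞)}

open scoped Pointwise

section Zariski

variable {R σ τ : Type*}

lemma IsZClosed.preimage_eval [CommSemiring R] {S : Set (τ → R)} (hS : IsZClosed S)
    (f : τ → MvPolynomial σ R) : IsZClosed ((fun x i => eval x (f i)) ⁻¹' S) := by
  obtain ⟨I, rfl⟩ := hS
  have eval_pullback (x : σ → R) (p : MvPolynomial τ R) :
      eval x (bind₁ f p) = eval (fun i => eval x (f i)) p :=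
    eval₂Hom_bind₁ (RingHom.id R) x f p
  exact ⟨bind₁ f '' I, by ext x; simp [zLocus, eval_pullback]⟩

lemma IsZOpen.preimage_const_sub [CommRing R] {U : Set (σ → R)} (hU : IsZOpen U) (v : σ → R) :
    IsZOpen ((fun x => v - x) ⁻¹' U) := by
  have reflection_eq_eval : (fun x => v - x) = fun x i => eval x (C (v i) - X i) := by
    ext x i
    simp
  rw [reflection_eq_eval]
  exact IsZClosed.preimage_eval hU _

lemma isZClosed_empty [CommSemiring R] [Nontrivial R] : IsZClosed (∅ : Set (σ → R)) :=
  ⟨{1}, by simp [zLocus]⟩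

lemma IsZDense.nonempty [CommSemiring R] [Nontrivial R] {S : Set (σ → R)} (hS : IsZDense S) :
    S.Nonempty := by
  rw [Set.nonempty_iff_ne_empty]
  rintro rfl
  exact Set.empty_ne_univ (hS ∅ isZClosed_empty subset_rfl)

lemma isZIrreducible_univ [CommRing R] [IsDomain R] [Infinite R] :
    IsZIrreducible (Set.univ : Set (σ → R)) := by
  refine ⟨Set.univ_nonempty, ?_⟩
  rintro _ _ ⟨I, rfl⟩ ⟨J, rfl⟩ hcover
  by_contra! hproper
  obtain ⟨⟨x, -, hx⟩, ⟨y, -, hy⟩⟩ := hproper.imp Set.not_subset.mp Set.not_subset.mp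
  obtain ⟨p, hpI, hpx⟩ : ∃ p ∈ I, eval x p ≠ 0 := by simpa [zLocus] using hx
  obtain ⟨q, hqJ, hqy⟩ : ∃ q ∈ J, eval y q ≠ 0 := by simpa [zLocus] using hy
  have hpq : p * q = 0 := MvPolynomial.funext fun z => by
    rw [map_mul, map_zero, mul_eq_zero]
    exact (hcover (Set.mem_univ z)).imp (· p hpI) (· q hqJ)
  rcases mul_eq_zero.mp hpq with rfl | rfl
  · exact hpx (map_zero _)
  · exact hqy (map_zero _)

lemma IsZIrreducible.inter_nonempty [CommSemiring R] {S U V : Set (σ → R)}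
    (hS : IsZIrreducible S) (hU : IsZOpen U) (hV : IsZOpen V) (hSU : (S ∩ U).Nonempty)
    (hSV : (S ∩ V).Nonempty) : (S ∩ (U ∩ V)).Nonempty := by
  obtain ⟨x, hxS, hxU⟩ := hSU
  obtain ⟨y, hyS, hyV⟩ := hSV
  by_contra hdisjoint
  have hcover : S ⊆ Uᶜ ∪ Vᶜ := by
    rw [← Set.compl_inter]
    exact fun z hzS hz => hdisjoint ⟨z, hzS, hz⟩
  rcases hS.2 _ _ hU hV hcover with hSU | hSV
  · exact hSU hxS hxU
  · exact hSV hyS hyV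

lemma IsZOpen.add_eq_univ [CommRing R] [IsDomain R] [Infinite R] {U V : Set (σ → R)}
    (hU : IsZOpen U) (hV : IsZOpen V) (hUne : U.Nonempty) (hVne : V.Nonempty) :
    U + V = Set.univ := by
  refine Set.eq_univ_of_forall fun v => ?_
  have hreflect : ((fun x => v - x) ⁻¹' V).Nonempty :=
    hVne.preimage (Equiv.subLeft v).surjective
  obtain ⟨x, -, hxU, hxV⟩ := isZIrreducible_univ.inter_nonempty hU (hV.preimage_const_sub v)
    (by rwa [Set.univ_inter]) (by rwa [Set.univ_inter])
  exact ⟨x, hxU, v - x, hxV, add_sub_cancel x v⟩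

end Zariski

section Rank

variable {R σ : Type*} [CommSemiring R] {S : Set (σ → R)} {v w : σ → R} {r s : ℕ}

lemma add_mem_sumsOf (hv : v ∈ sumsOf S r) (hw : w ∈ sumsOf S s) : v + w ∈ sumsOf S (r + s) := by
  obtain ⟨f, hf, rfl⟩ := hv
  obtain ⟨g, hg, rfl⟩ := hw
  refine ⟨Fin.append f g, fun i => ?_, by simp [Fin.sum_univ_add]⟩
  induction i using Fin.addCases with
  | left i => simpa using hf i
  | right i => simpa using hg i

lemma xRank_le_of_mem_sumsOf (hv : v ∈ sumsOf S r) : xRank S v ≤ r :=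
  sInf_le ⟨r, rfl, hv⟩

lemma exists_xRank_eq_and_mem_sumsOf (hv : xRank S v ≠ ⊤) :
    ∃ s : ℕ, xRank S v = s ∧ v ∈ sumsOf S s := by
  have hne : {k : ℕ∞ | ∃ s : ℕ, k = s ∧ v ∈ sumsOf S s}.Nonempty := by
    rw [Set.nonempty_iff_ne_empty]
    intro hempty
    exact hv (by rw [xRank, hempty, sInf_empty])
  exact csInf_mem hne

lemma xRank_add_le (S : Set (σ → R)) (v w : σ → R) :
    xRank S (v + w) ≤ xRank S v + xRank S w := by
  by_cases hv : xRank S v = ⊤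
  · simp [hv]
  by_cases hw : xRank S w = ⊤
  · simp [hw]
  obtain ⟨r, hr, hvr⟩ := exists_xRank_eq_and_mem_sumsOf hv
  obtain ⟨s, hs, hws⟩ := exists_xRank_eq_and_mem_sumsOf hw
  rw [hr, hs, ← Nat.cast_add]
  exact xRank_le_of_mem_sumsOf (add_mem_sumsOf hvr hws)

end Rank

theorem stmt_0_general {R σ : Type*} [CommRing R] [IsDomain R] [Infinite R] {S U : Set (σ → R)}
    {r : ℕ∞} (hU : IsZOpen U) (hUne : U.Nonempty) (hr : ∀ u ∈ U, xRank S u ≤ r) (v : σ → R) :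
    xRank S v ≤ 2 * r := by
  have hv : v ∈ U + U := hU.add_eq_univ hU hUne hUne ▸ Set.mem_univ v
  obtain ⟨x, hx, y, hy, rfl⟩ := hv
  calc xRank S (x + y) ≤ xRank S x + xRank S y := xRank_add_le S x y
    _ ≤ r + r := add_le_add (hr x hx) (hr y hy)
    _ = 2 * r := (two_mul r).symm

/-- Theorem 1 of the paper. Over an algebraically closed field, the
maximum `X`-rank is at most twice the generic `X`-rank. -/
theorem stmt_0 {F : Type*} [Field F] [IsAlgClosed F] {n : ℕ}
    (Xhat : Set (Fin (n + 1) → F))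
    (hclosed : IsZClosed Xhat) (hcone : IsCone Xhat)
    (hirr : IsZIrreducible Xhat) (hnondeg : Submodule.span F Xhat = ⊤)
    (rgen : ℕ)
    (hgen : ∃ U : Set (Fin (n + 1) → F), IsZOpen U ∧ IsZDense U ∧
      ∀ v ∈ U, xRank Xhat v = (rgen : ℕ∞))
    (rmax : ℕ∞)
    (hmax : IsGreatest {r : ℕ∞ | ∃ v : Fin (n + 1) → F, v ≠ 0 ∧ xRank Xhat v = r} rmax) :
    rmax ≤ 2 * (rgen : ℕ∞) := by
  obtain ⟨U, hopen, hdense, hU⟩ := hgen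
  obtain ⟨⟨v, -, rfl⟩, -⟩ := hmax
  exact stmt_0_general hopen hdense.nonempty (fun u hu => (hU u hu).le) v
end

section
/- Let n ≥ 1. Every nonzero tensor in (ℂ²)^{⊗n} = ℂ² ⊗ ⋯ ⊗ ℂ² (n factors) has tensor rank at most 2·⌈2ⁿ/(n+1)⌉, and every nonzero real tensor in (ℝ²)^{⊗n} has real tensor rank at most 2·⌈2ⁿ/(n+1)⌉. -/
/-!
Let `C` be a code of covering radius one. The tangent space of the Segre variety at a coordinate
tensor `e_c` contains `e_y` for every word `y` at distance at most one from `c`, so the tangent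
spaces at the `e_c`, `c ∈ C`, span the whole space. Hence the map sending `|C|` rank one tensors to
their sum is open at `(e_c)_c`, and after rescaling any finite family of tensors can be moved by one
common multiple `μ E` of `E = ∑ e_c` to tensors of rank at most `|C|`.

Let `n = k + m`, with `C` of length `m`. A tensor of order `n` has `2ᵏ` slices of order `m`.
Shifting all of them by the same `μ E` costs only `|C|` extra rank one terms, because the sum of
the coordinate tensors of order `k` is again decomposable. So the rank is at most `(2ᵏ + 1) |C|`.
For the Hamming code of the largest length `m = 2ʲ - 1 ≤ n`, where `|C| = 2ᵐ / 2ʲ`, this is at most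
`2 ⌈2ⁿ / (n + 1)⌉`.
-/

/-- The rank of a tensor `T` in a tensor product of modules: the least `r` such that `T`
is a sum of `r` decomposable (rank one) tensors (`⊤` if no such expression exists). -/
noncomputable def tensorRank (R : Type*) [CommSemiring R] {ι : Type*}
    (V : ι → Type*) [∀ i, AddCommMonoid (V i)] [∀ i, Module R (V i)]
    (T : PiTensorProduct R V) : ℕ∞ :=
  sInf {r : ℕ∞ | ∃ s : ℕ, r = s ∧ ∃ v : Fin s → (Π i, V i),
    T = ∑ j, PiTensorProduct.tprod R (v j)}

open Filter Function Module PiTensorProduct Topology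
open scoped TensorProduct

section TensorRank

variable {R : Type*} [CommSemiring R] {ι κ : Type*} {V : ι → Type*} {W : κ → Type*}
  [∀ i, AddCommMonoid (V i)] [∀ i, Module R (V i)]
  [∀ i, AddCommMonoid (W i)] [∀ i, Module R (W i)]

theorem tensorRank_sum_tprod_le {σ : Type*} (s : Finset σ) (v : σ → Π i, V i) :
    tensorRank R V (∑ a ∈ s, ⨂ₜ[R] i, v a i) ≤ s.card :=
  sInf_le ⟨_, rfl, fun j => v (s.equivFin.symm j), by
    rw [s.equivFin.symm.sum_comp fun a : s => PiTensorProduct.tprod R (v a),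
      Finset.sum_coe_sort s fun a => PiTensorProduct.tprod R (v a)]⟩

theorem exists_eq_sum_tprod_of_tensorRank_ne_top {T : ⨂[R] i, V i} (hT : tensorRank R V T ≠ ⊤) :
    ∃ s : ℕ, tensorRank R V T = s ∧ ∃ v : Fin s → Π i, V i, T = ∑ j, ⨂ₜ[R] i, v j i :=
  csInf_mem <| Set.nonempty_iff_ne_empty.2 fun h => hT <| (congrArg sInf h).trans sInf_empty

theorem tensorRank_zero : tensorRank R V 0 = 0 := by
  simpa using tensorRank_sum_tprod_le (R := R) (V := V) ∅ Empty.elim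

theorem tensorRank_add_le (S T : ⨂[R] i, V i) :
    tensorRank R V (S + T) ≤ tensorRank R V S + tensorRank R V T := by
  by_cases hS : tensorRank R V S = ⊤
  · simp [hS]
  by_cases hT : tensorRank R V T = ⊤
  · simp [hT]
  obtain ⟨s, hs, u, rfl⟩ := exists_eq_sum_tprod_of_tensorRank_ne_top hS
  obtain ⟨t, ht, v, rfl⟩ := exists_eq_sum_tprod_of_tensorRank_ne_top hT
  rw [hs, ht]
  simpa using tensorRank_sum_tprod_le (R := R) Finset.univ (Sum.elim u v)

theorem tensorRank_sum_le {σ : Type*} (s : Finset σ) (T : σ → ⨂[R] i, V i) :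
    tensorRank R V (∑ a ∈ s, T a) ≤ ∑ a ∈ s, tensorRank R V (T a) :=
  s.le_sum_of_subadditive (tensorRank R V) tensorRank_zero.le tensorRank_add_le T

theorem tensorRank_map_le (L : (⨂[R] i, V i) →ₗ[R] ⨂[R] i, W i)
    (hL : ∀ v, ∃ w, L (PiTensorProduct.tprod R v) = PiTensorProduct.tprod R w) (T : ⨂[R] i, V i) :
    tensorRank R W (L T) ≤ tensorRank R V T := by
  by_cases hT : tensorRank R V T = ⊤
  · simp [hT]
  obtain ⟨s, hs, v, rfl⟩ := exists_eq_sum_tprod_of_tensorRank_ne_top hT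
  choose w hw using hL
  rw [hs, map_sum]
  simpa [hw] using tensorRank_sum_tprod_le (R := R) Finset.univ fun j => w (v j)

theorem tensorRank_smul_le [Nonempty ι] (r : R) (T : ⨂[R] i, V i) :
    tensorRank R V (r • T) ≤ tensorRank R V T := by
  classical
  let i₀ := Classical.arbitrary ι
  exact tensorRank_map_le (LinearMap.lsmul R _ r)
    (fun v => ⟨update v i₀ (r • v i₀), by simp [MultilinearMap.map_update_smul]⟩) T

theorem tensorRank_reindex (e : ι ≃ κ) (T : ⨂[R] i, V i) :
    tensorRank R (fun k => V (e.symm k)) (reindex R V e T) = tensorRank R V T := by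
  refine le_antisymm
    (tensorRank_map_le (reindex R V e).toLinearMap (fun v => ⟨_, reindex_tprod e v⟩) T) ?_
  have h := tensorRank_map_le (reindex R V e).symm.toLinearMap (fun w => ?_) (reindex R V e T)
  · simpa using h
  · obtain ⟨v, rfl⟩ := (Equiv.piCongrLeft' V e).surjective w
    exact ⟨v, (LinearEquiv.symm_apply_eq _).2 (reindex_tprod e v).symm⟩

theorem tensorRank_tprod_tmul_le {V : κ ⊕ ι → Type*} [∀ i, AddCommMonoid (V i)]
    [∀ i, Module R (V i)] (u : Π k, V (.inl k)) (T : ⨂[R] i, V (.inr i)) :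
    tensorRank R V (tmulEquivDep R V (PiTensorProduct.tprod R u ⊗ₜ T)) ≤
      tensorRank R (fun i => V (.inr i)) T :=
  tensorRank_map_le (W := V)
    ((tmulEquivDep R V).toLinearMap ∘ₗ TensorProduct.mk R _ _ (PiTensorProduct.tprod R u))
    (fun v => ⟨_, tmulEquivDep_apply R V u v⟩) T

end TensorRank

section CoveringCode

variable {ι : Type*} [Fintype ι] {α : ι → Type*} [∀ i, DecidableEq (α i)]

/-- `C` is a code of covering radius at most one: every word differs from some codeword in at most
one position. -/
def IsCoveringCode (C : Finset (Π i, α i)) : Prop :=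
  ∀ y, ∃ c ∈ C, hammingDist c y ≤ 1

theorem hammingDist_le_one_iff [DecidableEq ι] [Nonempty ι] {x y : Π i, α i} :
    hammingDist x y ≤ 1 ↔ ∃ i, update x i (y i) = y := by
  simp only [hammingDist, Finset.card_le_one_iff_subset_singleton, update_eq_iff,
    Finset.subset_iff, Finset.mem_filter_univ, Finset.mem_singleton, true_and, not_imp_comm]

end CoveringCode

section HammingCode

variable (W : Type*) [Fintype W] [DecidableEq W] [AddCommGroup W] [Module (ZMod 2) W]

/-- The syndrome `∑ w, y_w • w` of a binary word `y` whose positions are the nonzero vectors of `W`: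
the parity check map of the Hamming code. -/
def hammingSyndrome : ({w : W // w ≠ 0} → ZMod 2) →ₗ[ZMod 2] W :=
  Fintype.linearCombination (ZMod 2) Subtype.val

/-- The binary Hamming code, of length `|W| - 1`: its positions are the nonzero vectors of `W`
rather than numbers, and its codewords are the words with vanishing syndrome. -/
def hammingCode : Finset ({w : W // w ≠ 0} → ZMod 2) := {y | hammingSyndrome W y = 0}

variable {W}

theorem hammingSyndrome_single (w : {w : W // w ≠ 0}) :
    hammingSyndrome W (Pi.single w 1) = w := by
  simp [hammingSyndrome]

theorem hammingSyndrome_surjective : Surjective (hammingSyndrome W) := by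
  intro s
  by_cases hs : s = 0
  · exact ⟨0, by simp [hs]⟩
  · exact ⟨_, hammingSyndrome_single ⟨s, hs⟩⟩

theorem card_hammingCode_mul_card :
    (hammingCode W).card * Fintype.card W = 2 ^ (Fintype.card W - 1) := by
  have h := Submodule.card_eq_card_quotient_mul_card (hammingSyndrome W).ker
  rw [Nat.card_congr ((hammingSyndrome W).quotKerEquivOfSurjective
    hammingSyndrome_surjective).toEquiv] at h
  have hker : Nat.card (hammingSyndrome W).ker = (hammingCode W).card :=
    Nat.subtype_card _ (by simp [hammingCode, LinearMap.mem_ker])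
  have hpos : Fintype.card {w : W // w ≠ 0} = Fintype.card W - 1 := by
    simp [Fintype.card_subtype_compl]
  simpa only [hker, hpos, Nat.card_eq_fintype_card, Fintype.card_fun, ZMod.card] using h.symm

theorem isCoveringCode_hammingCode : IsCoveringCode (hammingCode W) := by
  intro y
  by_cases hs : hammingSyndrome W y = 0
  · exact ⟨y, by simpa [hammingCode] using hs, by simp⟩
  -- A nonzero syndrome is itself a position; flipping the bit there corrects the word.
  have : Nonempty {w : W // w ≠ 0} := ⟨⟨_, hs⟩⟩
  refine ⟨y + Pi.single ⟨_, hs⟩ 1, ?_, hammingDist_le_one_iff.2 ⟨⟨_, hs⟩, ?_⟩⟩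
  · simp [hammingCode, hammingSyndrome_single, ZModModule.add_self]
  · simp +contextual [update_eq_iff]

end HammingCode

section Openness

variable {𝕜 : Type*} [NontriviallyNormedField 𝕜] {ι : Type*} [Fintype ι] {α : ι → Type*}

variable (𝕜 α) in
/-- The array with entries `∏ i, u i (y i)`, i.e. the rank one tensor `u₁ ⊗ ⋯ ⊗ uₙ` in coordinates,
as a continuous multilinear map of its factors. Unlike the tensor product, the space of arrays comes
with a norm, so that the inverse function theorem applies. -/
noncomputable def rankOneArray :
    ContinuousMultilinearMap 𝕜 (fun i => α i → 𝕜) ((Π i, α i) → 𝕜) :=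
  ContinuousMultilinearMap.pi fun y =>
    (ContinuousMultilinearMap.mkPiAlgebra 𝕜 ι 𝕜).compContinuousLinearMap fun i =>
      ContinuousLinearMap.proj (y i)

theorem rankOneArray_apply (u : Π i, α i → 𝕜) (y : Π i, α i) :
    rankOneArray 𝕜 α u y = ∏ i, u i (y i) := by
  simp [rankOneArray]

theorem equivFun_symm_rankOneArray [∀ i, Finite (α i)] {V : ι → Type*} [∀ i, AddCommGroup (V i)]
    [∀ i, Module 𝕜 (V i)] (b : Π i, Basis (α i) 𝕜 (V i)) (u : Π i, α i → 𝕜) :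
    (Basis.piTensorProduct b).equivFun.symm (rankOneArray 𝕜 α u) =
      ⨂ₜ[𝕜] i, (b i).equivFun.symm (u i) := by
  rw [LinearEquiv.symm_apply_eq]
  ext y
  simp only [rankOneArray_apply, Basis.equivFun_apply, Basis.piTensorProduct_repr_tprod_apply]
  simp only [← Basis.equivFun_apply, LinearEquiv.apply_symm_apply]

theorem hasStrictFDerivAt_sum_rankOneArray [DecidableEq ι] [∀ i, Finite (α i)] {σ : Type*}
    [Fintype σ] (E : σ → Π i, α i → 𝕜) :
    HasStrictFDerivAt (fun u : σ → Π i, α i → 𝕜 => ∑ c, rankOneArray 𝕜 α (u c))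
      (∑ c, (rankOneArray 𝕜 α).linearDeriv (E c) ∘L ContinuousLinearMap.proj c) E := by
  have (i : ι) := Fintype.ofFinite (α i)
  exact HasStrictFDerivAt.fun_sum fun c _ =>
    ((rankOneArray 𝕜 α).hasStrictFDerivAt (E c)).comp E
      (ContinuousLinearMap.proj (R := 𝕜) (φ := fun _ : σ => Π i, α i → 𝕜) c).hasStrictFDerivAt

variable [∀ i, DecidableEq (α i)]

theorem rankOneArray_single (c : Π i, α i) :
    rankOneArray 𝕜 α (fun i => Pi.single (c i) 1) = Pi.single c 1 := by
  classical
  ext y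
  simp [rankOneArray_apply, Pi.single_apply, Fintype.prod_ite_zero, funext_iff]

theorem linearDeriv_rankOneArray_single [DecidableEq ι] (c : Π i, α i) (i : ι) (a : α i) :
    (rankOneArray 𝕜 α).linearDeriv (fun l => Pi.single (c l) 1) (Pi.single i (Pi.single a 1)) =
      Pi.single (update c i a) 1 := by
  have hupdate : update (fun l => (Pi.single (c l) 1 : α l → 𝕜)) i (Pi.single a 1) =
      fun l => Pi.single (update c i a l) 1 :=
    funext fun l => (apply_update (fun l a => (Pi.single a 1 : α l → 𝕜)) c i a l).symm
  rw [ContinuousMultilinearMap.linearDeriv_apply, Fintype.sum_eq_single i, Pi.single_eq_same,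
    hupdate, rankOneArray_single]
  intro l hl
  exact (rankOneArray 𝕜 α).map_coord_zero l (by rw [update_self, Pi.single_eq_of_ne hl])

variable [∀ i, Finite (α i)]

theorem IsCoveringCode.range_sum_linearDeriv_eq_top [DecidableEq ι] [Nonempty ι]
    {C : Finset (Π i, α i)} (hC : IsCoveringCode C) :
    (∑ c : C, (rankOneArray 𝕜 α).linearDeriv (fun i => Pi.single (c.1 i) 1) ∘L
      ContinuousLinearMap.proj (φ := fun _ : C => Π i, α i → 𝕜) c).range = ⊤ := by
  rw [eq_top_iff, ← (Pi.basisFun 𝕜 (Π i, α i)).span_eq, Submodule.span_le]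
  rintro _ ⟨y, rfl⟩
  obtain ⟨c, hc, hcy⟩ := hC y
  obtain ⟨i, hi⟩ := hammingDist_le_one_iff.1 hcy
  refine ⟨Pi.single ⟨c, hc⟩ (Pi.single i (Pi.single (y i) 1)), ?_⟩
  rw [ContinuousLinearMap.coe_coe, _root_.sum_apply, Fintype.sum_eq_single ⟨c, hc⟩]
  · rw [ContinuousLinearMap.comp_apply, ContinuousLinearMap.proj_apply, Pi.single_eq_same,
      linearDeriv_rankOneArray_single, hi, Pi.basisFun_apply]
  · intro d hd
    rw [ContinuousLinearMap.comp_apply, ContinuousLinearMap.proj_apply, Pi.single_eq_of_ne hd,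
      map_zero]

theorem IsCoveringCode.map_nhds_sum_rankOneArray [CompleteSpace 𝕜] [Nonempty ι]
    {C : Finset (Π i, α i)} (hC : IsCoveringCode C) :
    map (fun u : C → Π i, α i → 𝕜 => ∑ c, rankOneArray 𝕜 α (u c))
      (𝓝 fun c i => Pi.single (c.1 i) 1) = 𝓝 (∑ c ∈ C, Pi.single c 1) := by
  classical
  have (i : ι) := Fintype.ofFinite (α i)
  rw [(hasStrictFDerivAt_sum_rankOneArray _).map_nhds_eq_of_surj hC.range_sum_linearDeriv_eq_top]
  simp only [rankOneArray_single, Finset.sum_coe_sort C fun c => Pi.single c (1 : 𝕜)]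

variable {V : ι → Type*} [∀ i, AddCommGroup (V i)] [∀ i, Module 𝕜 (V i)]
  (b : Π i, Basis (α i) 𝕜 (V i))

theorem IsCoveringCode.eventually_tensorRank_le [CompleteSpace 𝕜] [Nonempty ι]
    {C : Finset (Π i, α i)} (hC : IsCoveringCode C) :
    ∀ᶠ f in 𝓝 (∑ c ∈ C, Pi.single c 1),
      tensorRank 𝕜 V ((Basis.piTensorProduct b).equivFun.symm f) ≤ C.card := by
  rw [← hC.map_nhds_sum_rankOneArray]
  refine eventually_map.2 (Eventually.of_forall fun u => ?_)
  simp only [map_sum, equivFun_symm_rankOneArray]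
  simpa using tensorRank_sum_tprod_le (R := 𝕜) Finset.univ
    fun (c : C) i => (b i).equivFun.symm (u c i)

theorem IsCoveringCode.exists_forall_tensorRank_add_smul_le [CompleteSpace 𝕜] [Nonempty ι]
    {C : Finset (Π i, α i)} (hC : IsCoveringCode C) {σ : Type*} [Finite σ] (T : σ → ⨂[𝕜] i, V i) :
    ∃ μ : 𝕜, ∀ x, tensorRank 𝕜 V (T x + μ • ∑ c ∈ C, Basis.piTensorProduct b c) ≤ C.card := by
  classical
  let B := Basis.piTensorProduct b
  have hB : B.equivFun.symm (∑ c ∈ C, Pi.single c 1) = ∑ c ∈ C, B c := by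
    simp [-Basis.equivFun_symm_apply]
  have hsmall (x : σ) :
      ∀ᶠ t : 𝕜 in 𝓝 0, tensorRank 𝕜 V (∑ c ∈ C, B c + t • T x) ≤ C.card := by
    have hcont : Tendsto (fun t : 𝕜 => ∑ c ∈ C, Pi.single c 1 + t • B.equivFun (T x)) (𝓝 0)
        (𝓝 (∑ c ∈ C, Pi.single c 1)) :=
      Continuous.tendsto' (by fun_prop) _ _ (by simp)
    filter_upwards [hcont.eventually (hC.eventually_tensorRank_le b)] with t ht
    rwa [map_add, map_smul, LinearEquiv.symm_apply_apply, hB] at ht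
  -- One nonzero `t` serves all `x`; dividing by it turns `E + t T x` into `T x + t⁻¹ E`.
  obtain ⟨t, ht, ht₀⟩ := (((eventually_all.2 hsmall).filter_mono nhdsWithin_le_nhds).and
    (eventually_mem_nhdsWithin (a := (0 : 𝕜)) (s := {0}ᶜ))).exists
  refine ⟨t⁻¹, fun x => ?_⟩
  calc tensorRank 𝕜 V (T x + t⁻¹ • ∑ c ∈ C, B c)
      = tensorRank 𝕜 V (t⁻¹ • (∑ c ∈ C, B c + t • T x)) := by
        rw [smul_add, inv_smul_smul₀ ht₀, add_comm]
    _ ≤ tensorRank 𝕜 V (∑ c ∈ C, B c + t • T x) := tensorRank_smul_le _ _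
    _ ≤ C.card := ht x

end Openness

section Slicing

variable {𝕜 : Type*} [NontriviallyNormedField 𝕜] [CompleteSpace 𝕜] {κ ι : Type*} [Fintype κ]
  [Fintype ι] [Nonempty ι] {α : κ ⊕ ι → Type*} [∀ i, Fintype (α i)] [∀ i, DecidableEq (α i)]
  {V : κ ⊕ ι → Type*} [∀ i, AddCommGroup (V i)] [∀ i, Module 𝕜 (V i)]

theorem IsCoveringCode.tensorRank_le {C : Finset (Π i, α (.inr i))} (hC : IsCoveringCode C)
    (b : Π i, Basis (α i) 𝕜 (V i)) (T : ⨂[𝕜] i, V i) :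
    tensorRank 𝕜 V T ≤ (((∏ k, Fintype.card (α (.inl k))) * C.card + C.card : ℕ) : ℕ∞) := by
  classical
  let B := Basis.piTensorProduct fun k => b (.inl k)
  let E := ∑ c ∈ C, Basis.piTensorProduct (fun i => b (.inr i)) c
  obtain ⟨T, rfl⟩ := (tmulEquivDep 𝕜 V).surjective T
  obtain ⟨S, rfl⟩ := TensorProduct.eq_repr_basis_left B T
  obtain ⟨μ, hμ⟩ := hC.exists_forall_tensorRank_add_smul_le (fun i => b (.inr i)) S
  have hB : ∑ x, B x = ⨂ₜ[𝕜] k, ∑ a, b (.inl k) a := by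
    simp only [B, Basis.piTensorProduct_apply, MultilinearMap.map_sum]
  have hE : tensorRank 𝕜 (fun i => V (.inr i)) E ≤ C.card := by
    simpa only [E, Basis.piTensorProduct_apply] using
      tensorRank_sum_tprod_le C fun c i => b (.inr i) (c i)
  have hsplit : (S.sum fun x s => B x ⊗ₜ[𝕜] s) =
      ∑ x, B x ⊗ₜ[𝕜] (S x + μ • E) + (∑ x, B x) ⊗ₜ[𝕜] (-μ • E) := by
    rw [Finsupp.sum_fintype _ _ fun _ => TensorProduct.tmul_zero _ _, TensorProduct.sum_tmul,
      ← Finset.sum_add_distrib]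
    simp only [← TensorProduct.tmul_add, neg_smul, add_neg_cancel_right]
  have hslice (x) : tensorRank 𝕜 V (tmulEquivDep 𝕜 V (B x ⊗ₜ (S x + μ • E))) ≤ C.card := by
    rw [Basis.piTensorProduct_apply]
    exact (tensorRank_tprod_tmul_le _ _).trans (hμ x)
  have hshift : tensorRank 𝕜 V (tmulEquivDep 𝕜 V ((∑ x, B x) ⊗ₜ (-μ • E))) ≤ C.card := by
    rw [hB]
    exact (tensorRank_tprod_tmul_le _ _).trans ((tensorRank_smul_le _ _).trans hE)
  rw [hsplit, map_add, map_sum, ← Fintype.card_pi, Nat.cast_add, Nat.cast_mul, ← nsmul_eq_mul]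
  exact (tensorRank_add_le _ _).trans <| add_le_add
    ((tensorRank_sum_le _ _).trans (Finset.sum_le_card_nsmul _ _ _ fun x _ => hslice x)) hshift

end Slicing

section Count

theorem two_pow_add_one_mul_add_le {k q : ℕ} (hq : 4 ≤ q) (hk : k < q) :
    (2 ^ k + 1) * (q + k) ≤ 2 * 2 ^ k * q := by
  suffices h : (2 ^ k + 1) * k + q ≤ 2 ^ k * q by linarith
  match k with
  | 0 | 1 | 2 => omega
  | k + 3 =>
    have hpow : 2 * (k + 3) + 1 ≤ 2 ^ (k + 3) := by
      have := Nat.lt_two_pow_self (n := k)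
      rw [pow_add]
      omega
    nlinarith

theorem two_pow_mul_add_le_two_mul_ceil {j k c : ℕ} (hj : 1 ≤ j) (hk : k < 2 ^ j)
    {n : ℕ} (hn : n + 1 = 2 ^ j + k) (hc : c * 2 ^ j = 2 ^ (2 ^ j - 1)) :
    2 ^ k * c + c ≤ 2 * ((2 ^ n + n) / (n + 1)) := by
  obtain rfl | hj := hj.eq_or_lt
  · obtain rfl : c = 1 := by omega
    obtain rfl : n = k + 1 := by omega
    interval_cases k <;> norm_num
  have hq : 4 ≤ 2 ^ j := Nat.pow_le_pow_right (n := 2) two_pos hj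
  have hpow : 2 ^ n = 2 ^ k * (c * 2 ^ j) := by
    rw [hc, ← pow_add]
    congr 1
    omega
  have hceil : 2 ^ n ≤ (n + 1) * ((2 ^ n + n) / (n + 1)) :=
    le_smul_ceilDiv (a := n + 1) (b := 2 ^ n) n.succ_pos
  refine Nat.le_of_mul_le_mul_left ?_ n.succ_pos
  calc (n + 1) * (2 ^ k * c + c) = c * ((2 ^ k + 1) * (2 ^ j + k)) := by rw [hn]; ring
    _ ≤ c * (2 * 2 ^ k * 2 ^ j) := Nat.mul_le_mul_left _ (two_pow_add_one_mul_add_le hq hk)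
    _ = 2 * 2 ^ n := by rw [hpow]; ring
    _ ≤ 2 * ((n + 1) * ((2 ^ n + n) / (n + 1))) := Nat.mul_le_mul_left _ hceil
    _ = (n + 1) * (2 * ((2 ^ n + n) / (n + 1))) := by ring

end Count

section HammingBound

variable {𝕜 : Type*} [NontriviallyNormedField 𝕜] [CompleteSpace 𝕜] {ι : Type*}
  [Fintype ι] {V : ι → Type*} [∀ i, AddCommGroup (V i)] [∀ i, Module 𝕜 (V i)]

theorem tensorRank_le_card_hammingCode {W : Type*} [Fintype W] [DecidableEq W] [AddCommGroup W]
    [Module (ZMod 2) W] [Nontrivial W] {k : ℕ} (hk : Fintype.card ι + 1 = Fintype.card W + k)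
    (hV : ∀ i, finrank 𝕜 (V i) = 2) (T : ⨂[𝕜] i, V i) :
    tensorRank 𝕜 V T ≤ ((2 ^ k * (hammingCode W).card + (hammingCode W).card : ℕ) : ℕ∞) := by
  have hcard : Fintype.card {w : W // w ≠ 0} = Fintype.card W - 1 := by
    simp [Fintype.card_subtype_compl]
  let e : ι ≃ Fin k ⊕ {w : W // w ≠ 0} := Fintype.equivOfCardEq <| by
    rw [Fintype.card_sum, Fintype.card_fin, hcard]
    have := Fintype.card_pos (α := W)
    omega
  have hfin i : Module.Finite 𝕜 (V i) := finite_of_finrank_eq_succ (hV i)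
  have : Nonempty {w : W // w ≠ 0} := nonempty_subtype.2 (exists_ne 0)
  let b i := (finBasisOfFinrankEq 𝕜 (V i) (hV i)).reindex (ZMod.finEquiv 2).toEquiv
  have h := isCoveringCode_hammingCode.tensorRank_le (fun i => b (e.symm i)) (reindex 𝕜 V e T)
  simpa only [tensorRank_reindex, ZMod.card, Finset.prod_const, Finset.card_univ,
    Fintype.card_fin] using h

theorem stmt_10_general [Nonempty ι] (hV : ∀ i, finrank 𝕜 (V i) = 2) (T : ⨂[𝕜] i, V i) :
    tensorRank 𝕜 V T ≤
      ((2 * ((2 ^ Fintype.card ι + Fintype.card ι) / (Fintype.card ι + 1)) : ℕ) : ℕ∞) := by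
  set n := Fintype.card ι
  have hn₀ : n ≠ 0 := Fintype.card_ne_zero
  let j := Nat.log 2 (n + 1)
  have hj : 1 ≤ j := Nat.log_pos one_lt_two (by omega)
  have hjn : 2 ^ j ≤ n + 1 := Nat.pow_log_le_self 2 n.succ_ne_zero
  have hnj : n + 1 < 2 ^ (j + 1) := Nat.lt_pow_succ_log_self one_lt_two _
  obtain ⟨k, hk⟩ := Nat.exists_eq_add_of_le hjn
  have hW : Fintype.card (Fin j → ZMod 2) = 2 ^ j := by simp
  have : Nonempty (Fin j) := ⟨⟨0, hj⟩⟩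
  have hC := card_hammingCode_mul_card (W := Fin j → ZMod 2)
  rw [hW] at hC
  exact (tensorRank_le_card_hammingCode (hW.symm ▸ hk) hV T).trans <|
    Nat.cast_le.2 (two_pow_mul_add_le_two_mul_ceil hj (by omega) hk hC)

end HammingBound

/-- Every nonzero tensor in `(ℂ²)^{⊗n}` has rank at most
`2⌈2ⁿ/(n+1)⌉`, and likewise for real tensors in `(ℝ²)^{⊗n}`. -/
theorem stmt_10 (n : ℕ) (hn : 1 ≤ n) :
    (∀ T : PiTensorProduct ℂ (fun _ : Fin n => Fin 2 → ℂ), T ≠ 0 →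
      tensorRank ℂ (fun _ : Fin n => Fin 2 → ℂ) T ≤
        ((2 * ((2 ^ n + n) / (n + 1)) : ℕ) : ℕ∞)) ∧
    (∀ T : PiTensorProduct ℝ (fun _ : Fin n => Fin 2 → ℝ), T ≠ 0 →
      tensorRank ℝ (fun _ : Fin n => Fin 2 → ℝ) T ≤
        ((2 * ((2 ^ n + n) / (n + 1)) : ℕ) : ℕ∞)) := by
  have : Nonempty (Fin n) := ⟨⟨0, hn⟩⟩
  exact ⟨fun T _ => by simpa only [Fintype.card_fin] using stmt_10_general (fun _ => by simp) T,
    fun T _ => by simpa only [Fintype.card_fin] using stmt_10_general (fun _ => by simp) T⟩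
end

section
/- For n > 3, every nonzero tensor in ℂⁿ ⊗ ℂⁿ ⊗ ℂⁿ has tensor rank at most 2·⌈n³/(3n−2)⌉, and every nonzero real tensor in ℝⁿ ⊗ ℝⁿ ⊗ ℝⁿ has real tensor rank at most 2·⌈n³/(3n−2)⌉. For n = 3, the corresponding bound is 10 in both cases. -/
/-- The bound for the maximum rank of tensors in `𝔽ⁿ ⊗ 𝔽ⁿ ⊗ 𝔽ⁿ`: `10` for `n = 3` and
`2⌈n³/(3n-2)⌉` for `n > 3`. -/
def tripleBound (n : ℕ) : ℕ :=
  if n = 3 then 10 else 2 * ((n ^ 3 + (3 * n - 3)) / (3 * n - 2))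

/-!
The argument works over every complete nontrivially normed field and uses no generic rank. View a
tensor in `𝕜ⁿ ⊗ 𝕜ⁿ ⊗ 𝕜ⁿ` as `n` square slices, group the slices into `⌈n/2⌉` pairs, and fix a
diagonal matrix `D` with distinct entries. Modulo diagonal matrices every pair of slices has
the form `(P Q, P D Q)`: the map `(P, Q, δ₀, δ₁) ↦ (P Q + diag δ₀, P D Q + diag δ₁)` vanishes at
`P = Q = 1`, `δ₀ = -1`, `δ₁ = -D` and has surjective derivative there, because the entries of `D`
are distinct, so that every pair is a nonzero multiple of a value of the map.

A pair `(P Q, P D Q)` costs `n` rank-one terms (column `l` of `P` times row `l` of `Q`), and all the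
diagonal corrections together cost `n` more terms, of the form `e_l ⊗ e_l ⊗ w_l`. Finally
`(⌈n/2⌉ + 1) n ≤ 2⌈n³/(3n-2)⌉`.
-/

open Matrix Topology

section InverseFunction

variable {𝕜 E F : Type*} [NontriviallyNormedField 𝕜]
  [NormedAddCommGroup E] [NormedSpace 𝕜 E] [CompleteSpace E]
  [NormedAddCommGroup F] [NormedSpace 𝕜 F] [CompleteSpace F]

theorem exists_apply_eq_add_smul_of_surjective_fderiv {f : E → F} {f' : E →L[𝕜] F} {a : E}
    (hf : HasStrictFDerivAt f f' a) (hf' : Function.Surjective f') (v : F) :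
    ∃ s : 𝕜, s ≠ 0 ∧ ∃ x, f x = f a + s • v := by
  have hrange : Set.range f ∈ 𝓝 (f a) :=
    hf.map_nhds_eq_of_surj (LinearMap.range_eq_top.2 hf') ▸ Filter.range_mem_map
  have hlim : Filter.Tendsto (fun s : 𝕜 => f a + s • v) (𝓝[≠] 0) (𝓝 (f a)) := by
    have hcont : Continuous fun s : 𝕜 => f a + s • v := by fun_prop
    simpa only [zero_smul, add_zero] using (hcont.tendsto 0).mono_left nhdsWithin_le_nhds
  obtain ⟨s, hs, hs0⟩ := ((hlim.eventually hrange).and self_mem_nhdsWithin).exists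
  exact ⟨s, hs0, hs⟩

end InverseFunction

section PairDecomposition

variable {ι κ 𝕜 : Type*} [Fintype ι] [DecidableEq ι]

/-- The map `(P, Q, δ) ↦ (P Dₑ Q + diag δₑ)ₑ`, where `Dₑ = diag (d e)`. Its values are the families
of matrices which, modulo diagonal matrices, factor simultaneously through the `Dₑ`. -/
def mulDiagonalMulAdd [NonUnitalNonAssocSemiring 𝕜] (d : κ → ι → 𝕜)
    (x : Matrix ι ι 𝕜 × Matrix ι ι 𝕜 × (κ → ι → 𝕜)) : κ → Matrix ι ι 𝕜 :=
  fun e => x.1 * diagonal (d e) * x.2.1 + diagonal (x.2.2 e)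

theorem mulDiagonalMulAdd_one_one_neg [NonAssocRing 𝕜] (d : κ → ι → 𝕜) :
    mulDiagonalMulAdd d (1, 1, -d) = 0 := by
  ext1 e
  simp [mulDiagonalMulAdd]

open scoped Matrix.Norms.Operator in
theorem exists_hasStrictFDerivAt_mulDiagonalMulAdd [Finite κ] [NontriviallyNormedField 𝕜]
    (d δ : κ → ι → 𝕜) :
    ∃ f' : Matrix ι ι 𝕜 × Matrix ι ι 𝕜 × (κ → ι → 𝕜) →L[𝕜] κ → Matrix ι ι 𝕜,
      HasStrictFDerivAt (mulDiagonalMulAdd d) f' (1, 1, δ) ∧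
      ∀ X Y η e, f' (X, Y, η) e = X * diagonal (d e) + diagonal (d e) * Y + diagonal (η e) := by
  have := Fintype.ofFinite κ
  let diagCLM : (ι → 𝕜) →L[𝕜] Matrix ι ι 𝕜 :=
    ⟨diagonalLinearMap ι 𝕜 𝕜, continuous_id.matrix_diagonal⟩
  have hentry (e : κ) := ((hasStrictFDerivAt_fst.mul_const' (diagonal (d e))).mul'
    (hasStrictFDerivAt_fst.comp _ hasStrictFDerivAt_snd)).add
    (((diagCLM ∘L .proj e ∘L .snd 𝕜 (Matrix ι ι 𝕜) _) ∘L
      .snd 𝕜 (Matrix ι ι 𝕜) _).hasStrictFDerivAt (x := (1, 1, δ)))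
  refine ⟨_, hasStrictFDerivAt_pi.2 hentry, fun X Y η e => ?_⟩
  change 1 * diagonal (d e) * Y + X * diagonal (d e) * 1 + diagonal (η e) = _
  rw [one_mul, mul_one, add_comm (diagonal (d e) * Y)]

/-- Off the diagonal, the entries at `(i, j)` of the two equations form a `2 × 2` linear system with
determinant `d i - d j`. -/
theorem exists_add_mul_diagonal_pow_add_diagonal_eq [Field 𝕜] {d : ι → 𝕜}
    (hd : Function.Injective d) (U : Fin 2 → Matrix ι ι 𝕜) :
    ∃ (X Y : Matrix ι ι 𝕜) (η : Fin 2 → ι → 𝕜), ∀ e : Fin 2,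
      X * diagonal (d ^ (e : ℕ)) + diagonal (d ^ (e : ℕ)) * Y + diagonal (η e) = U e := by
  -- On the diagonal the denominators vanish, and both `X` and `Y` have entry `x / 0 = 0`.
  refine ⟨of fun i j => (d i * U 0 i j - U 1 i j) / (d i - d j),
    of fun i j => (U 1 i j - d j * U 0 i j) / (d i - d j), fun e i => U e i i, fun e => ?_⟩
  ext i j
  rw [Matrix.add_apply, Matrix.add_apply, mul_diagonal, diagonal_mul]
  obtain rfl | hij := eq_or_ne i j
  · simp
  · have hdij : d i - d j ≠ 0 := sub_ne_zero.2 (hd.ne hij)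
    fin_cases e <;> simp [hij] <;> field_simp <;> ring

open scoped Matrix.Norms.Operator in
theorem exists_eq_mul_diagonal_pow_mul_add_diagonal [NontriviallyNormedField 𝕜] [CompleteSpace 𝕜]
    {d : ι → 𝕜} (hd : Function.Injective d) (A : Fin 2 → Matrix ι ι 𝕜) :
    ∃ (P Q : Matrix ι ι 𝕜) (δ : Fin 2 → ι → 𝕜), ∀ e : Fin 2,
      A e = P * diagonal (d ^ (e : ℕ)) * Q + diagonal (δ e) := by
  let D : Fin 2 → ι → 𝕜 := fun e => d ^ (e : ℕ)
  obtain ⟨f', hf, hf'⟩ := exists_hasStrictFDerivAt_mulDiagonalMulAdd D (-D)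
  have hsurj : Function.Surjective f' := fun U => by
    obtain ⟨X, Y, η, h⟩ := exists_add_mul_diagonal_pow_add_diagonal_eq hd U
    exact ⟨(X, Y, η), funext fun e => (hf' X Y η e).trans (h e)⟩
  -- The uniformity of the operator norm is not reducibly equal to the global one on matrices.
  have : @CompleteSpace (Matrix ι ι 𝕜) PseudoMetricSpace.toUniformSpace :=
    FiniteDimensional.complete 𝕜 _
  obtain ⟨s, hs, ⟨P, Q, δ⟩, hx⟩ := exists_apply_eq_add_smul_of_surjective_fderiv hf hsurj A
  rw [mulDiagonalMulAdd_one_one_neg, zero_add] at hx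
  refine ⟨s⁻¹ • P, Q, s⁻¹ • δ, fun e => ?_⟩
  calc A e = s⁻¹ • (s • A) e := by rw [Pi.smul_apply, inv_smul_smul₀ hs]
    _ = s⁻¹ • (P * diagonal (d ^ (e : ℕ)) * Q + diagonal (δ e)) := by rw [← hx]; rfl
    _ = _ := by simp only [smul_add, smul_mul, Pi.smul_apply, diagonal_smul]

end PairDecomposition

section Slices

variable {ι κ τ 𝕜 : Type*} [Fintype ι] [DecidableEq ι] [Fintype κ]
  [NontriviallyNormedField 𝕜] [CompleteSpace 𝕜]

theorem exists_eq_sum_mul_diagonal_mul {g : τ → κ × Fin 2} (hg : Function.Injective g)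
    (A : τ → Matrix ι ι 𝕜) :
    ∃ (P Q : Option κ → Matrix ι ι 𝕜) (w : Option κ → τ → ι → 𝕜),
      ∀ t, A t = ∑ o, P o * diagonal (w o t) * Q o := by
  classical
  let d : ι ↪ 𝕜 := (Fintype.equivFin ι).toEmbedding.trans
    (Fin.valEmbedding.trans (Infinite.natEmbedding 𝕜))
  let A' : κ × Fin 2 → Matrix ι ι 𝕜 := Function.extend g A 0
  choose P Q δ hA' using fun q =>
    exists_eq_mul_diagonal_pow_mul_add_diagonal d.injective fun e => A' (q, e)
  -- The summand `none` collects the diagonal corrections.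
  refine ⟨fun o => o.elim 1 P, fun o => o.elim 1 Q, fun o t => o.elim (δ (g t).1 (g t).2)
    fun q => if (g t).1 = q then d ^ ((g t).2 : ℕ) else 0, fun t => ?_⟩
  have hsum : ∑ q, P q * diagonal (if (g t).1 = q then ⇑d ^ ((g t).2 : ℕ) else 0) * Q q =
      P (g t).1 * diagonal (⇑d ^ ((g t).2 : ℕ)) * Q (g t).1 := by
    rw [Finset.sum_eq_single (g t).1 (fun q _ hq => by simp [hq.symm]) (by simp), if_pos rfl]
  calc A t = A' (g t) := (hg.extend_apply A 0 t).symm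
    _ = _ := by simp [hA' (g t).1 (g t).2, Fintype.sum_option, hsum, add_comm]

end Slices

section TensorRank

theorem tensorRank_sum_tprod_le_s11 {R ι σ : Type*} [CommSemiring R] {V : ι → Type*}
    [∀ i, AddCommMonoid (V i)] [∀ i, Module R (V i)] [Fintype σ] (v : σ → Π i, V i) :
    tensorRank R V (∑ x, PiTensorProduct.tprod R (v x)) ≤ (Fintype.card σ : ℕ∞) :=
  sInf_le ⟨Fintype.card σ, rfl, v ∘ (Fintype.equivFin σ).symm,
    ((Fintype.equivFin σ).symm.sum_comp fun x => PiTensorProduct.tprod R (v x)).symm⟩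

theorem eq_sum_tprod_of_repr_eq {R ι σ : Type*} [CommSemiring R] [Fintype ι] {κ : ι → Type*}
    [∀ i, Finite (κ i)] [Fintype σ] {T : PiTensorProduct R fun i => κ i → R}
    {v : σ → Π i, κ i → R}
    (h : ∀ p, (Basis.piTensorProduct fun i => Pi.basisFun R (κ i)).repr T p =
      ∑ x, ∏ i, v x i (p i)) :
    T = ∑ x, PiTensorProduct.tprod R (v x) := by
  refine (Basis.piTensorProduct fun i => Pi.basisFun R (κ i)).ext_elem fun p => ?_
  simp [h p]

theorem tensorRank_le_half_card_add_one_mul_card {ι 𝕜 : Type*} [Fintype ι]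
    [NontriviallyNormedField 𝕜] [CompleteSpace 𝕜]
    (T : PiTensorProduct 𝕜 fun _ : Fin 3 => ι → 𝕜) :
    tensorRank 𝕜 (fun _ : Fin 3 => ι → 𝕜) T ≤
      (((Fintype.card ι + 1) / 2 + 1) * Fintype.card ι : ℕ) := by
  classical
  let t := (Basis.piTensorProduct fun _ : Fin 3 => Pi.basisFun 𝕜 ι).repr T
  obtain ⟨g⟩ : Nonempty (ι ↪ Fin ((Fintype.card ι + 1) / 2) × Fin 2) :=
    Function.Embedding.nonempty_of_card_le (by
      rw [Fintype.card_prod, Fintype.card_fin, Fintype.card_fin]; omega)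
  obtain ⟨P, Q, w, hslice⟩ :=
    exists_eq_sum_mul_diagonal_mul g.injective fun k => of fun i j => t ![i, j, k]
  have hT : T = ∑ x : Option (Fin ((Fintype.card ι + 1) / 2)) × ι, PiTensorProduct.tprod 𝕜
      ![(P x.1).col x.2, (Q x.1).row x.2, fun k => w x.1 k x.2] := by
    refine eq_sum_tprod_of_repr_eq fun p => ?_
    calc t p = t ![p 0, p 1, p 2] := by congr 1; ext i; fin_cases i <;> rfl
      _ = (∑ o, P o * diagonal (w o (p 2)) * Q o) (p 0) (p 1) := by rw [← hslice]; rfl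
      _ = ∑ o, ∑ l, P o (p 0) l * w o (p 2) l * Q o l (p 1) := by
        simp only [Matrix.sum_apply, mul_apply (M := _ * diagonal _), mul_diagonal]
      _ = _ := by simp [Fintype.sum_prod_type, Fin.prod_univ_three, mul_right_comm]
  rw [hT]
  exact (tensorRank_sum_tprod_le_s11 _).trans_eq (by simp)

end TensorRank

theorem half_add_one_mul_le_tripleBound (n : ℕ) : ((n + 1) / 2 + 1) * n ≤ tripleBound n := by
  obtain hn | hn := lt_or_ge n 6
  · interval_cases n <;> decide
  rw [tripleBound, if_neg (by omega)]
  have hN : (n ^ 3 + (3 * n - 3)) / (3 * n - 2) = n ^ 3 ⌈/⌉ (3 * n - 2) := by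
    rw [Nat.ceilDiv_eq_add_pred_div, show n ^ 3 + (3 * n - 2) - 1 = n ^ 3 + (3 * n - 3) by omega]
  rw [hN]
  set N := n ^ 3 ⌈/⌉ (3 * n - 2)
  have hceil : n ^ 3 ≤ (3 * n - 2) * N := le_smul_ceilDiv (show 0 < 3 * n - 2 by omega)
  -- The difference of the two sides is `n (n - 1) (n - 6)`.
  have hpoly : (3 * n - 2) * ((n + 3) * n) ≤ 4 * n ^ 3 := by
    obtain ⟨m, rfl⟩ := Nat.exists_eq_add_of_le hn
    rw [show 3 * (6 + m) - 2 = 3 * m + 16 by omega]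
    nlinarith [Nat.zero_le (m ^ 3), Nat.zero_le (m ^ 2)]
  have hquad : (n + 3) * n ≤ 4 * N :=
    le_of_mul_le_mul_left (by linarith) (show 0 < 3 * n - 2 by omega)
  have hhalf : 2 * ((n + 1) / 2 + 1) ≤ n + 3 := by omega
  linarith [Nat.mul_le_mul_right n hhalf]

theorem stmt_11_general {𝕜 : Type*} [NontriviallyNormedField 𝕜] [CompleteSpace 𝕜] (n : ℕ)
    (T : PiTensorProduct 𝕜 (fun _ : Fin 3 => Fin n → 𝕜)) :
    tensorRank 𝕜 (fun _ : Fin 3 => Fin n → 𝕜) T ≤ (tripleBound n : ℕ∞) := by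
  have hrank := tensorRank_le_half_card_add_one_mul_card T
  rw [Fintype.card_fin] at hrank
  exact hrank.trans (mod_cast half_add_one_mul_le_tripleBound n)

/-- For `n > 3` every nonzero tensor in `ℂⁿ ⊗ ℂⁿ ⊗ ℂⁿ` (resp.
`ℝⁿ ⊗ ℝⁿ ⊗ ℝⁿ`) has rank at most `2⌈n³/(3n-2)⌉`; for `n = 3` the bound is `10`. -/
theorem stmt_11 (n : ℕ) (hn : 3 ≤ n) :
    (∀ T : PiTensorProduct ℂ (fun _ : Fin 3 => Fin n → ℂ), T ≠ 0 →
      tensorRank ℂ (fun _ : Fin 3 => Fin n → ℂ) T ≤ (tripleBound n : ℕ∞)) ∧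
    (∀ T : PiTensorProduct ℝ (fun _ : Fin 3 => Fin n → ℝ), T ≠ 0 →
      tensorRank ℝ (fun _ : Fin 3 => Fin n → ℝ) T ≤ (tripleBound n : ℕ∞)) := by
  exact ⟨fun T _ => stmt_11_general n T, fun T _ => stmt_11_general n T⟩
end

section
/- Let k, d ≥ 1. Every complex homogeneous form of degree kd in n+1 variables is a sum of at most 2kⁿ k-th powers of complex homogeneous forms of degree d, and every real homogeneous form of degree kd in n+1 variables is a real linear combination (possibly with negative coefficients) of at most 2kⁿ k-th powers of real homogeneous forms of degree d. -/
open MvPolynomial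

/-!
Let `s` be a set of `k` scalars and, for `a` in the grid `sⁿ`, put `L_a = x₀ + a₁x₁ + ⋯ + aₙxₙ`.

The forms `L_a ^ (d(k-1)) * h_a`, with `h_a` of degree `d`, span all forms of degree `kd`. Indeed,
if a functional `l` kills all of them, expand `w ↦ l (L_w ^ (kd))` along a line through `a`: the
terms of degree at most `d` in the parameter are values of `l` on multiples of `L_a ^ (d(k-1))`.
So this polynomial of degree `kd < k(d+1)` vanishes to order `d + 1` on the grid. Such a
polynomial is zero: by induction it vanishes on the hyperplanes `w₁ = c` with `c ∈ s`, and
dividing by `∏ (w₁ - c)` lowers the degree by `k` and the order of vanishing by one. Hence `l` is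
zero on forms of degree `kd`.

Up to the factor `k`, these forms make up the image of the derivative of `(g_a) ↦ ∑ g_a ^ k` at
`(L_a ^ d)`, so by the inverse function theorem every form close to `f₀ = ∑ L_a ^ (kd)` is a sum
of `kⁿ` `k`-th powers. For any `f` and small `ε ≠ 0` this gives `f = ε⁻¹ ((f₀ + ε f) - f₀)`, a
combination of `2kⁿ` of them, whose coefficients are absorbed when they have `k`-th roots.
-/

section VanishingOrder

variable {σ R : Type*} [CommRing R]

/-- The expansion of `p (a + t x)` as a polynomial in `t`, where the direction `x` is the tuple of
variables `X i`, that is, a generic direction. -/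
noncomputable def lineExpansion (a : σ → R) :
    MvPolynomial σ R →ₐ[R] Polynomial (MvPolynomial σ R) :=
  aeval fun i => Polynomial.C (C (a i)) + Polynomial.X * Polynomial.C (X i)

/-- The polynomial `p` vanishes to order at least `m` at the point `a`: its expansion at `a` in a
generic direction is divisible by the `m`-th power of the parameter of the line. -/
def VanishesToOrder (m : ℕ) (a : σ → R) (p : MvPolynomial σ R) : Prop :=
  Polynomial.X ^ m ∣ lineExpansion a p

lemma lineExpansion_X (a : σ → R) (i : σ) :
    lineExpansion a (X i) = Polynomial.C (C (a i)) + Polynomial.X * Polynomial.C (X i) :=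
  aeval_X _ i

lemma lineExpansion_C (a : σ → R) (c : R) : lineExpansion a (C c) = Polynomial.C (C c) :=
  aeval_C _ c

lemma coeff_zero_lineExpansion (a : σ → R) (p : MvPolynomial σ R) :
    (lineExpansion a p).coeff 0 = C (eval a p) := by
  have : Polynomial.constantCoeff.comp (lineExpansion a).toRingHom = C.comp (eval a) := by
    ext i <;> simp [lineExpansion_X]
  exact DFunLike.congr_fun this p

lemma mapAlgHom_lineExpansion (v a : σ → R) (p : MvPolynomial σ R) :
    Polynomial.mapAlgHom (aeval v) (lineExpansion a p) =
      aeval (fun i => Polynomial.C (a i) + Polynomial.X * Polynomial.C (v i)) p := by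
  rw [lineExpansion, ← AlgHom.comp_apply, comp_aeval]
  simp

namespace VanishesToOrder

variable {a : σ → R} {m : ℕ} {p q : MvPolynomial σ R}

lemma eval_eq_zero (h : VanishesToOrder m a p) (hm : m ≠ 0) : eval a p = 0 := by
  have := Polynomial.X_dvd_iff.1 ((dvd_pow_self _ hm).trans h)
  rwa [coeff_zero_lineExpansion, C_eq_zero] at this

variable [IsDomain R]

lemma of_mul_of_eval_ne_zero (hp : eval a p ≠ 0) (h : VanishesToOrder m a (p * q)) :
    VanishesToOrder m a q := by
  rw [VanishesToOrder, map_mul] at h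
  refine Polynomial.prime_X.pow_dvd_of_dvd_mul_left m ?_ h
  rwa [Polynomial.X_dvd_iff, coeff_zero_lineExpansion, C_eq_zero]

lemma of_X_sub_C_mul {i : σ} (h : VanishesToOrder (m + 1) a ((X i - C (a i)) * q)) :
    VanishesToOrder m a q := by
  have hX : lineExpansion a (X i - C (a i)) = Polynomial.X * Polynomial.C (X i) := by
    rw [map_sub, lineExpansion_X, lineExpansion_C, add_sub_cancel_left]
  rw [VanishesToOrder, map_mul, hX, pow_succ', mul_assoc,
    mul_dvd_mul_iff_left Polynomial.X_ne_zero] at h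
  refine Polynomial.prime_X.pow_dvd_of_dvd_mul_left m ?_ h
  rw [Polynomial.X_dvd_iff, Polynomial.coeff_C_zero]
  exact X_ne_zero i

lemma of_forall_direction [Infinite R]
    (h : ∀ v : σ → R, Polynomial.X ^ m ∣
      aeval (fun i => Polynomial.C (a i) + Polynomial.X * Polynomial.C (v i)) p) :
    VanishesToOrder m a p := by
  refine Polynomial.X_pow_dvd_iff.2 fun j hj => MvPolynomial.funext fun v => ?_
  have := Polynomial.X_pow_dvd_iff.1 (h v) j hj
  rw [← mapAlgHom_lineExpansion] at this
  simpa [aeval_eq_eval] using this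

end VanishesToOrder

end VanishingOrder

section Grid

variable {R : Type*} [CommRing R] {n : ℕ}

/-- Restriction of a polynomial to the hyperplane where the first variable equals `c`. -/
noncomputable def restrictFirst (c : R) :
    MvPolynomial (Fin (n + 1)) R →ₐ[R] MvPolynomial (Fin n) R :=
  aeval (Fin.cons (C c) X)

lemma restrictFirst_eq_eval_finSuccEquiv (c : R) (p : MvPolynomial (Fin (n + 1)) R) :
    restrictFirst c p = (finSuccEquiv R n p).eval (C c) := by
  have : restrictFirst c =
      ((Polynomial.aeval (C c)).restrictScalars R).comp (finSuccEquiv R n).toAlgHom := by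
    ext1 i
    cases i using Fin.cases <;> simp [restrictFirst, finSuccEquiv_X_zero, finSuccEquiv_X_succ]
  exact DFunLike.congr_fun this p

lemma prod_X_zero_sub_C_dvd [IsDomain R] (s : Finset R) {p : MvPolynomial (Fin (n + 1)) R}
    (h : ∀ c ∈ s, restrictFirst c p = 0) : ∏ c ∈ s, (X 0 - C c) ∣ p := by
  rcases eq_or_ne p 0 with rfl | hp
  · exact dvd_zero _
  have hP : finSuccEquiv R n p ≠ 0 := by simpa using hp
  have le_roots : s.val.map C ≤ (finSuccEquiv R n p).roots := by
    rw [Multiset.le_iff_subset (s.nodup.map (C_injective (Fin n) R))]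
    simpa only [Multiset.subset_iff, Multiset.mem_map, Polynomial.mem_roots hP, Polynomial.IsRoot,
      forall_exists_index, and_imp, forall_apply_eq_imp_iff₂, Finset.mem_val,
      restrictFirst_eq_eval_finSuccEquiv] using h
  rw [← map_dvd_iff (finSuccEquiv R n)]
  convert (Multiset.prod_X_sub_C_dvd_iff_le_roots hP _).2 le_roots
  have finSuccEquiv_C (c : R) : finSuccEquiv R n (C c) = Polynomial.C (C c) :=
    (finSuccEquiv R n).commutes c
  simp [finSuccEquiv_X_zero, finSuccEquiv_C]

lemma VanishesToOrder.restrict {c : R} {a : Fin n → R} {m : ℕ}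
    {p : MvPolynomial (Fin (n + 1)) R} (h : VanishesToOrder m (Fin.cons c a) p) :
    VanishesToOrder m a (restrictFirst c p) := by
  have restrict_comm : (lineExpansion a).comp (restrictFirst c) =
      (Polynomial.mapAlgHom (restrictFirst 0)).comp (lineExpansion (Fin.cons c a)) := by
    ext1 i
    cases i using Fin.cases <;> simp [lineExpansion_X, restrictFirst]
  have := DFunLike.congr_fun restrict_comm p
  simp only [AlgHom.comp_apply] at this
  rw [VanishesToOrder, this]
  simpa using map_dvd (Polynomial.mapAlgHom (restrictFirst 0)) h

lemma totalDegree_aeval_le {σ τ : Type*} {u : σ → MvPolynomial τ R}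
    (hu : ∀ i, (u i).totalDegree ≤ 1) (p : MvPolynomial σ R) :
    (aeval u p).totalDegree ≤ p.totalDegree := by
  rw [aeval_def, eval₂_eq]
  refine totalDegree_finsetSum_le fun γ hγ => (totalDegree_mul _ _).trans ?_
  rw [algebraMap_eq, totalDegree_C, zero_add]
  calc (∏ i ∈ γ.support, u i ^ γ i).totalDegree ≤ ∑ i ∈ γ.support, (u i ^ γ i).totalDegree :=
        totalDegree_finsetProd _ _
    _ ≤ ∑ i ∈ γ.support, γ i := Finset.sum_le_sum fun i _ =>
        (totalDegree_pow _ _).trans (by simpa using Nat.mul_le_mul_left (γ i) (hu i))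
    _ ≤ p.totalDegree := le_totalDegree hγ

lemma totalDegree_restrictFirst_le (c : R) (p : MvPolynomial (Fin (n + 1)) R) :
    (restrictFirst c p).totalDegree ≤ p.totalDegree :=
  totalDegree_aeval_le (Fin.cases (by simp) fun i =>
    (totalDegree_monomial_le (Finsupp.single i 1) (1 : R)).trans (by simp)) p

lemma totalDegree_X_sub_C [Nontrivial R] {σ : Type*} (i : σ) (c : R) :
    (X i - C c : MvPolynomial σ R).totalDegree = 1 := by
  rw [sub_eq_add_neg, ← C_neg, totalDegree_add_eq_left_of_totalDegree_lt] <;> simp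

lemma coeff_tail_restrictFirst_one {p : MvPolynomial (Fin (n + 1)) R} {D : ℕ}
    (hp : p.IsHomogeneous D) {γ : Fin (n + 1) →₀ ℕ} (hγ : γ.degree = D) :
    coeff γ.tail (restrictFirst 1 p) = coeff γ p := by
  have coeff_cons_tail_eq_zero (i : ℕ) (hi : i ≠ γ 0) : coeff (γ.tail.cons i) p = 0 := by
    refine hp.coeff_eq_zero fun h => hi ?_
    rw [← hγ, Finsupp.degree_eq_sum, Finsupp.degree_eq_sum, Fin.sum_univ_succ, Fin.sum_univ_succ]
      at h
    simpa [Finsupp.tail_apply] using h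
  rw [restrictFirst_eq_eval_finSuccEquiv, C_1, Polynomial.eval_eq_sum, Polynomial.sum, coeff_sum]
  simp only [one_pow, mul_one, finSuccEquiv_coeff_coeff]
  rw [Finset.sum_eq_single (γ 0) (fun i _ => coeff_cons_tail_eq_zero i), Finsupp.cons_tail]
  intro h
  rw [← finSuccEquiv_coeff_coeff, Polynomial.notMem_support_iff.1 h, coeff_zero]

lemma eq_zero_of_restrictFirst_one_eq_zero {p : MvPolynomial (Fin (n + 1)) R} {D : ℕ}
    (hp : p.IsHomogeneous D) (h : restrictFirst 1 p = 0) : p = 0 := by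
  ext γ
  by_cases hγ : γ.degree = D
  · rw [← coeff_tail_restrictFirst_one hp hγ, h, coeff_zero, coeff_zero]
  · rw [hp.coeff_eq_zero hγ, coeff_zero]

variable [IsDomain R]

lemma prod_X_sub_C_ne_zero {σ : Type*} (s : Finset R) (i : σ) :
    (∏ c ∈ s, (X i - C c) : MvPolynomial σ R) ≠ 0 :=
  Finset.prod_ne_zero_iff.2 fun c _ h => by simpa [h] using totalDegree_X_sub_C i c

lemma totalDegree_prod_X_sub_C {σ : Type*} (s : Finset R) (i : σ) :
    (∏ c ∈ s, (X i - C c) : MvPolynomial σ R).totalDegree = s.card := by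
  classical
  induction s using Finset.induction_on with
  | empty => simp
  | insert c s hc ih =>
    rw [Finset.prod_insert hc, totalDegree_mul_of_isDomain _ (prod_X_sub_C_ne_zero s i), ih,
      totalDegree_X_sub_C, Finset.card_insert_of_notMem hc, add_comm]
    exact fun h => by simpa [h] using totalDegree_X_sub_C i c

lemma VanishesToOrder.of_prod_X_sub_C_mul {σ : Type*} {i : σ} {s : Finset R} {m : ℕ} {a : σ → R}
    (ha : a i ∈ s) {q : MvPolynomial σ R}
    (h : VanishesToOrder (m + 1) a ((∏ c ∈ s, (X i - C c)) * q)) : VanishesToOrder m a q := by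
  classical
  rw [← Finset.mul_prod_erase s _ ha, mul_assoc] at h
  refine h.of_X_sub_C_mul.of_mul_of_eval_ne_zero ?_
  rw [eval_prod, Finset.prod_ne_zero_iff]
  intro c hc
  simpa [sub_eq_zero] using (Finset.ne_of_mem_erase hc).symm

theorem eq_zero_of_vanishesToOrder_grid (s : Finset R) {m : ℕ} {p : MvPolynomial (Fin n) R}
    (hp : p.totalDegree < s.card * m)
    (h : ∀ a : Fin n → R, (∀ i, a i ∈ s) → VanishesToOrder m a p) : p = 0 := by
  induction n generalizing m with
  | zero =>
    have hm : m ≠ 0 := by rintro rfl; simp at hp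
    obtain ⟨c, rfl⟩ := C_surjective (Fin 0) p
    simpa using (h Fin.elim0 finZeroElim).eval_eq_zero hm
  | succ n ihn =>
    induction m generalizing p with
    | zero => simp at hp
    | succ m ihm =>
      have restrictFirst_eq_zero (c) (hc : c ∈ s) : restrictFirst c p = 0 :=
        ihn ((totalDegree_restrictFirst_le c p).trans_lt hp) fun a ha =>
          (h (Fin.cons c a) (Fin.cases hc ha)).restrict
      obtain ⟨q, rfl⟩ := prod_X_zero_sub_C_dvd s restrictFirst_eq_zero
      by_contra hpq
      have hq : q ≠ 0 := right_ne_zero_of_mul hpq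
      rw [totalDegree_mul_of_isDomain (prod_X_sub_C_ne_zero s 0) hq, totalDegree_prod_X_sub_C,
        mul_add_one] at hp
      exact hq (ihm (by lia) fun a ha => (h a ha).of_prod_X_sub_C_mul (ha 0))

end Grid

section Duality

variable {σ R : Type*} [Fintype σ] [CommRing R]

/-- The linear form `∑ i, w i * X i` with given coefficients. -/
noncomputable def linearForm : (σ → R) →ₗ[R] MvPolynomial σ R :=
  Fintype.linearCombination R X

lemma isHomogeneous_linearForm (w : σ → R) : (linearForm w).IsHomogeneous 1 := by
  rw [linearForm, Fintype.linearCombination_apply]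
  exact .sum _ _ _ fun i _ => (homogeneousSubmodule σ R 1).smul_mem _ (isHomogeneous_X R i)

lemma isHomogeneous_linearForm_pow (w : σ → R) (m : ℕ) : (linearForm w ^ m).IsHomogeneous m := by
  simpa using (isHomogeneous_linearForm w).pow m

variable [DecidableEq σ]

/-- The dual form, or Macaulay inverse system, of a functional `l` on forms of degree `D`: the form
of degree `D` whose value at `w` is `l (linearForm w ^ D)`. -/
noncomputable def dualForm (l : MvPolynomial σ R →ₗ[R] R) (D : ℕ) : MvPolynomial σ R :=
  ∑ γ ∈ Finset.finsuppAntidiag Finset.univ D, monomial γ (γ.multinomial * l (monomial γ 1))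

variable (l : MvPolynomial σ R →ₗ[R] R) (D : ℕ)

lemma isHomogeneous_dualForm : (dualForm l D).IsHomogeneous D := by
  refine .sum _ _ _ fun γ hγ => isHomogeneous_monomial _ ?_
  rw [Finsupp.degree_eq_sum]
  exact (Finset.mem_finsuppAntidiag.1 hγ).1

lemma linearForm_pow_eq_sum (w : σ → R) : linearForm w ^ D =
    ∑ γ ∈ Finset.finsuppAntidiag Finset.univ D,
      (γ.multinomial * γ.prod fun i m => w i ^ m) • monomial γ 1 := by
  ext γ
  rw [linearForm, Fintype.linearCombination_apply, coeff_linearCombination_X_pow_of_fintype]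
  simp [coeff_sum, coeff_monomial, Finsupp.sum_fintype]

lemma eval_dualForm (w : σ → R) : eval w (dualForm l D) = l (linearForm w ^ D) := by
  rw [dualForm, linearForm_pow_eq_sum, map_sum, map_sum]
  refine Finset.sum_congr rfl fun γ _ => ?_
  rw [eval_monomial, map_smul, smul_eq_mul]
  ring

lemma coeff_dualForm {γ : σ →₀ ℕ} (hγ : γ.degree = D) :
    coeff γ (dualForm l D) = γ.multinomial * l (monomial γ 1) := by
  rw [Finsupp.degree_eq_sum] at hγ
  simp [dualForm, coeff_sum, coeff_monomial, hγ]

lemma eq_zero_of_dualForm_eq_zero [IsDomain R] [CharZero R] {l : MvPolynomial σ R →ₗ[R] R} {D : ℕ}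
    (h : dualForm l D = 0) {f : MvPolynomial σ R} (hf : f.IsHomogeneous D) : l f = 0 := by
  rw [f.as_sum, map_sum]
  refine Finset.sum_eq_zero fun γ hγ => ?_
  have hdeg : γ.degree = D := not_imp_comm.1 hf.coeff_eq_zero (mem_support_iff.1 hγ)
  have hl : l (monomial γ 1) = 0 := by
    have := coeff_dualForm l D hdeg
    have multinomial_ne_zero : (γ.multinomial : R) ≠ 0 := by
      rw [Finsupp.multinomial_eq]
      exact Nat.cast_ne_zero.2 (Nat.multinomial_pos _ _).ne'
    simpa [h, multinomial_ne_zero] using this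
  rw [← mul_one (coeff γ f), ← smul_eq_mul, ← smul_monomial, map_smul, hl, smul_zero]

lemma aeval_dualForm_line [IsDomain R] [Infinite R] (a v : σ → R) :
    aeval (fun i => Polynomial.C (a i) + Polynomial.X * Polynomial.C (v i)) (dualForm l D) =
      ∑ j ∈ Finset.range (D + 1), Polynomial.X ^ j *
        Polynomial.C (l (linearForm v ^ j * linearForm a ^ (D - j)) * D.choose j) := by
  refine Polynomial.funext fun t => ?_
  have eval_line : (aeval (fun i => Polynomial.C (a i) + Polynomial.X * Polynomial.C (v i))
      (dualForm l D)).eval t = eval (t • v + a) (dualForm l D) := by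
    rw [← Polynomial.coe_aeval_eq_eval, ← AlgHom.comp_apply, comp_aeval, ← aeval_eq_eval]
    congr 2
    ext i
    simp
    ring
  rw [eval_line, eval_dualForm, map_add, map_smul, add_pow, map_sum, Polynomial.eval_finsetSum]
  refine Finset.sum_congr rfl fun j _ => ?_
  rw [← nsmul_eq_mul', map_nsmul, smul_pow, smul_mul_assoc, map_smul]
  simp only [smul_eq_mul, nsmul_eq_mul, Polynomial.eval_mul, Polynomial.eval_pow,
    Polynomial.eval_X, Polynomial.eval_C]
  ring

lemma vanishesToOrder_dualForm [IsDomain R] [Infinite R] {a : σ → R} {d e : ℕ}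
    (hl : ∀ h : MvPolynomial σ R, h.IsHomogeneous d → l (linearForm a ^ e * h) = 0) :
    VanishesToOrder (d + 1) a (dualForm l (e + d)) := by
  refine .of_forall_direction fun v => ?_
  rw [aeval_dualForm_line]
  refine Finset.dvd_sum fun j _ => ?_
  rcases Nat.lt_or_ge d j with hdj | hjd
  · exact (pow_dvd_pow _ hdj).mul_right _
  · obtain ⟨i, rfl⟩ := Nat.exists_eq_add_of_le hjd
    have hsplit : linearForm v ^ j * linearForm a ^ (e + (j + i) - j) =
        linearForm a ^ e * (linearForm v ^ j * linearForm a ^ i) := by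
      rw [show e + (j + i) - j = e + i by lia]
      ring
    rw [hsplit, hl _ ((isHomogeneous_linearForm_pow v j).mul (isHomogeneous_linearForm_pow a i))]
    simp

theorem exists_sum_linearForm_pow_mul_eq {K : Type*} [Field K] [CharZero K] {n d e : ℕ}
    (s : Finset K) (hs : e + d < s.card * (d + 1)) {f : MvPolynomial (Fin (n + 1)) K}
    (hf : f.IsHomogeneous (e + d)) :
    ∃ h : (Fin n → K) → homogeneousSubmodule (Fin (n + 1)) K d,
      ∑ a ∈ Fintype.piFinset fun _ => s, linearForm (Fin.cons 1 a) ^ e * (h a).1 = f := by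
  classical
  let T (a : Fin n → K) : Submodule K (MvPolynomial (Fin (n + 1)) K) :=
    (homogeneousSubmodule (Fin (n + 1)) K d).map
      (LinearMap.mulLeft K (linearForm (Fin.cons 1 a) ^ e))
  suffices f ∈ ⨆ a ∈ Fintype.piFinset fun _ => s, T a by
    obtain ⟨μ, hμ⟩ := (Submodule.mem_iSup_finset_iff_exists_sum _ _).1 this
    choose h hh hμh using fun a => (μ a).2
    exact ⟨fun a => ⟨h a, hh a⟩, by simpa [← hμh] using hμ⟩
  by_contra hmem
  obtain ⟨l, hlf, hl⟩ := Submodule.exists_le_ker_of_notMem hmem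
  refine hlf (eq_zero_of_dualForm_eq_zero ?_ hf)
  refine eq_zero_of_restrictFirst_one_eq_zero (isHomogeneous_dualForm l (e + d)) ?_
  refine eq_zero_of_vanishesToOrder_grid s (((totalDegree_restrictFirst_le _ _).trans
    (isHomogeneous_dualForm l _).totalDegree_le).trans_lt hs) fun a ha => ?_
  refine VanishesToOrder.restrict (vanishesToOrder_dualForm l fun h hh => hl ?_)
  exact Submodule.mem_iSup_of_mem a <| Submodule.mem_iSup_of_mem (by simpa using ha) ⟨h, hh, rfl⟩

end Duality

section Calculus

variable {𝕜 E F : Type*} [NontriviallyNormedField 𝕜] [NormedAddCommGroup E] [NormedSpace 𝕜 E]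
  [NormedAddCommGroup F] [NormedSpace 𝕜 F]

lemma exists_smul_eq_sub_of_hasStrictFDerivAt [CompleteSpace E] [CompleteSpace F] {f : E → F}
    {f' : E →L[𝕜] F} {x : E} (hf : HasStrictFDerivAt f f' x) (hf' : f'.range = ⊤) (w : F) :
    ∃ ε : 𝕜, ε ≠ 0 ∧ ∃ y, ε • w = f y - f x := by
  have image_mem_nhds : Set.range f ∈ nhds (f x) :=
    hf.map_nhds_eq_of_surj hf' ▸ Filter.range_mem_map
  have tendsto_line : Filter.Tendsto (fun ε : 𝕜 => f x + ε • w) (nhdsWithin 0 {0}ᶜ)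
      (nhds (f x)) := by
    have : Continuous fun ε : 𝕜 => f x + ε • w := by fun_prop
    simpa using (this.tendsto 0).mono_left nhdsWithin_le_nhds
  obtain ⟨ε, ⟨y, hy⟩, hε⟩ :=
    ((tendsto_line.eventually image_mem_nhds).and self_mem_nhdsWithin).exists
  exact ⟨ε, hε, y, by rw [hy, add_sub_cancel_left]⟩

lemma hasStrictFDerivAt_codRestrict {p : Submodule 𝕜 F} {f : E → F} (hf : ∀ x, f x ∈ p)
    {f' : E →L[𝕜] p} {x : E} (h : HasStrictFDerivAt f (p.subtypeL ∘L f') x) :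
    HasStrictFDerivAt (Set.codRestrict f p hf) f' x :=
  .of_isLittleO <| .of_norm_left <| h.isLittleO.norm_left

end Calculus

section SumsOfPowers

lemma exists_linearMap_sum_mul_eq {𝕜 A ι : Type*} [Field 𝕜] [Ring A] [Algebra 𝕜 A] [Fintype ι]
    {V W : Submodule 𝕜 A} (t : ι → A) (h : ∀ w ∈ W, ∃ v : ι → V, ∑ i, t i * v i = w) :
    ∃ s : W →ₗ[𝕜] ι → V, ∀ w, ∑ i, t i * s w i = w := by
  let b := Module.Basis.ofVectorSpace 𝕜 W
  choose v hv using fun j => h (b j) (b j).2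
  refine ⟨b.constr 𝕜 v, fun w => ?_⟩
  let T : (ι → V) →ₗ[𝕜] A := ∑ i, (LinearMap.mulLeft 𝕜 (t i)) ∘ₗ V.subtype ∘ₗ LinearMap.proj i
  have hT (v : ι → V) : T v = ∑ i, t i * v i := by simp [T]
  have : T ∘ₗ b.constr 𝕜 v = W.subtype := b.ext fun j => by
    rw [LinearMap.comp_apply, b.constr_basis, hT, hv, Submodule.subtype_apply]
  rw [← hT, ← LinearMap.comp_apply, this, Submodule.subtype_apply]

theorem exists_smul_eq_sum_pow_sub_sum_pow {𝕜 A ι : Type*} [NontriviallyNormedField 𝕜]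
    [CompleteSpace 𝕜] [NormedCommRing A] [NormedAlgebra 𝕜 A] [Fintype ι] {V W : Submodule 𝕜 A}
    [FiniteDimensional 𝕜 W] {k : ℕ} (hk : (k : 𝕜) ≠ 0)
    (hVW : ∀ v ∈ V, v ^ k ∈ W) (u : ι → V)
    (hspan : ∀ w ∈ W, ∃ v : ι → V, ∑ i, (u i : A) ^ (k - 1) * v i = w) {w : A} (hw : w ∈ W) :
    ∃ ε : 𝕜, ε ≠ 0 ∧ ∃ v : ι → V, ε • w = ∑ i, (v i : A) ^ k - ∑ i, (u i : A) ^ k := by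
  have : CompleteSpace W := FiniteDimensional.complete 𝕜 W
  obtain ⟨s, hs⟩ := exists_linearMap_sum_mul_eq _ hspan
  let sCoord (i : ι) : W →L[𝕜] A :=
    LinearMap.toContinuousLinearMap (V.subtype ∘ₗ LinearMap.proj i ∘ₗ s)
  let Φ : W → A := fun x => ∑ i, ((u i : A) + sCoord i x) ^ k
  have hΦW (x : W) : Φ x ∈ W := W.sum_mem fun i _ => hVW _ (V.add_mem (u i).2 (s x i).2)
  have hΦ : HasStrictFDerivAt Φ (W.subtypeL ∘L ((k : 𝕜) • ContinuousLinearMap.id 𝕜 W)) 0 := by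
    refine (HasStrictFDerivAt.fun_sum fun i _ =>
      ((sCoord i).hasStrictFDerivAt.const_add (u i : A)).pow k).congr_fderiv ?_
    ext x
    simp [← hs x, sCoord, Finset.mul_sum, Algebra.smul_def, mul_assoc]
  have range_eq_top : ((k : 𝕜) • ContinuousLinearMap.id 𝕜 W).range = ⊤ :=
    LinearMap.range_eq_top.2 fun x => ⟨(k : 𝕜)⁻¹ • x, by simp [smul_smul, hk]⟩
  obtain ⟨ε, hε, x, hx⟩ := exists_smul_eq_sub_of_hasStrictFDerivAt
    (hasStrictFDerivAt_codRestrict hΦW hΦ) range_eq_top ⟨w, hw⟩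
  refine ⟨ε, hε, u + s x, ?_⟩
  simpa [Φ, sCoord] using congrArg Subtype.val hx

end SumsOfPowers

section Forms

/-- The tuple of values of a polynomial at the points of the grid `S ^ σ`. It is injective on forms
of small degree and its target is a finite-dimensional normed algebra, so calculus applies to
polynomials without a norm on the polynomial ring. -/
noncomputable def gridEval {R : Type*} (σ : Type*) [Fintype σ] [DecidableEq σ] [CommRing R]
    (S : Finset R) : MvPolynomial σ R →ₐ[R] (Fintype.piFinset fun _ : σ => S) → R :=
  AlgHom.pi fun y => aeval y.1

lemma eq_of_gridEval_eq {R σ : Type*} [Fintype σ] [DecidableEq σ] [CommRing R] [IsDomain R]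
    {S : Finset R} {D : ℕ} (hS : D < S.card) {p q : MvPolynomial σ R} (hp : p.IsHomogeneous D)
    (hq : q.IsHomogeneous D) (h : gridEval σ S p = gridEval σ S q) : p = q := by
  rw [← sub_eq_zero]
  refine eq_zero_of_eval_zero_at_prod_finset _ (fun _ => S) (fun i => ?_) fun y hy => ?_
  · exact ((degreeOf_le_totalDegree _ i).trans (hp.sub hq).totalDegree_le).trans_lt hS
  · rw [map_sub, sub_eq_zero]
    exact congrFun h ⟨y, Fintype.mem_piFinset.2 hy⟩

variable {𝕜 : Type*} [NontriviallyNormedField 𝕜] [CompleteSpace 𝕜] [CharZero 𝕜] {k d : ℕ}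

lemma exists_smul_eq_sum_pow_sub_sum_pow_of_form {σ ι : Type*} [Finite σ] [Fintype ι]
    (hk : k ≠ 0) (u : ι → homogeneousSubmodule σ 𝕜 d)
    (hspan : ∀ f : MvPolynomial σ 𝕜, f.IsHomogeneous (k * d) →
      ∃ v : ι → homogeneousSubmodule σ 𝕜 d, ∑ i, (u i).1 ^ (k - 1) * (v i).1 = f)
    {f : MvPolynomial σ 𝕜} (hf : f.IsHomogeneous (k * d)) :
    ∃ ε : 𝕜, ε ≠ 0 ∧ ∃ g : ι → homogeneousSubmodule σ 𝕜 d,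
      ε • f = ∑ i, (g i).1 ^ k - ∑ i, (u i).1 ^ k := by
  classical
  cases nonempty_fintype σ
  obtain ⟨S, hS⟩ := Infinite.exists_subset_card_eq 𝕜 (k * d + 1)
  let forms (D : ℕ) := (homogeneousSubmodule σ 𝕜 D).map (gridEval σ S).toLinearMap
  have pow_mem {p : MvPolynomial σ 𝕜} (hp : p.IsHomogeneous d) : (p ^ k).IsHomogeneous (k * d) :=
    mul_comm k d ▸ hp.pow k
  obtain ⟨ε, hε, v, hv⟩ := exists_smul_eq_sum_pow_sub_sum_pow (V := forms d) (W := forms (k * d))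
    (Nat.cast_ne_zero.2 hk)
    (by
      rintro _ ⟨p, hp, rfl⟩
      exact ⟨p ^ k, pow_mem hp, map_pow (gridEval σ S) p k⟩)
    (fun i => ⟨gridEval σ S (u i), u i, (u i).2, rfl⟩)
    (by
      rintro _ ⟨p, hp, rfl⟩
      obtain ⟨v, rfl⟩ := hspan p hp
      exact ⟨fun i => ⟨gridEval σ S (v i), v i, (v i).2, rfl⟩, by simp⟩)
    ⟨f, hf, rfl⟩
  choose g hg hgv using fun i => (v i).2
  refine ⟨ε, hε, fun i => ⟨g i, hg i⟩, eq_of_gridEval_eq (S := S) (by lia)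
    ((homogeneousSubmodule σ 𝕜 (k * d)).smul_mem ε hf)
    ((IsHomogeneous.sum _ _ _ fun i _ => pow_mem (hg i)).sub
      (.sum _ _ _ fun i _ => pow_mem (u i).2)) ?_⟩
  simpa [← hgv] using hv

variable {n : ℕ}

theorem exists_smul_eq_sum_pow_sub_sum_pow_of_isHomogeneous (hk : k ≠ 0)
    {f : MvPolynomial (Fin (n + 1)) 𝕜} (hf : f.IsHomogeneous (k * d)) :
    ∃ ε : 𝕜, ε ≠ 0 ∧ ∃ g h : Fin (k ^ n) → homogeneousSubmodule (Fin (n + 1)) 𝕜 d,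
      ε • f = ∑ i, (g i).1 ^ k - ∑ i, (h i).1 ^ k := by
  obtain ⟨s, hs⟩ := Infinite.exists_subset_card_eq 𝕜 k
  let grid := Fintype.piFinset fun _ : Fin n => s
  let point : Fin (k ^ n) ≃ grid := (Finset.equivFinOfCardEq (by simp [grid, hs])).symm
  let u (i : Fin (k ^ n)) : homogeneousSubmodule (Fin (n + 1)) 𝕜 d :=
    ⟨linearForm (Fin.cons 1 (point i).1) ^ d, isHomogeneous_linearForm_pow _ d⟩
  have hkd : (d * (k - 1)) + d = k * d := by
    obtain ⟨k, rfl⟩ := Nat.exists_eq_add_one_of_ne_zero hk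
    simp only [Nat.add_sub_cancel]
    ring
  obtain ⟨ε, hε, g, hg⟩ := exists_smul_eq_sum_pow_sub_sum_pow_of_form hk u (fun p hp => by
    obtain ⟨v, rfl⟩ := exists_sum_linearForm_pow_mul_eq (d := d) (e := d * (k - 1)) s
      (by rw [hkd, hs]; exact Nat.mul_lt_mul_of_pos_left d.lt_succ_self (Nat.pos_of_ne_zero hk))
      (hkd ▸ hp)
    refine ⟨fun i => v (point i), ?_⟩
    simp only [u, ← pow_mul]
    rw [← Finset.sum_coe_sort (Fintype.piFinset fun _ => s), ← point.sum_comp]) hf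
  exact ⟨ε, hε, g, u, hg⟩

theorem exists_eq_sum_C_mul_pow (hk : k ≠ 0)
    {f : MvPolynomial (Fin (n + 1)) 𝕜} (hf : f.IsHomogeneous (k * d)) :
    ∃ (c : Fin (2 * k ^ n) → 𝕜) (g : Fin (2 * k ^ n) → MvPolynomial (Fin (n + 1)) 𝕜),
      (∀ i, (g i).IsHomogeneous d) ∧ f = ∑ i, C (c i) * g i ^ k := by
  obtain ⟨ε, hε, g, h, hgh⟩ := exists_smul_eq_sum_pow_sub_sum_pow_of_isHomogeneous hk hf
  rw [two_mul]
  refine ⟨Fin.append (fun _ => ε⁻¹) (fun _ => -ε⁻¹),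
    Fin.append (fun i => (g i).1) (fun i => (h i).1), ?_, ?_⟩
  · refine Fin.addCases (fun i => ?_) (fun i => ?_)
    · rw [Fin.append_left]
      exact (g i).2
    · rw [Fin.append_right]
      exact (h i).2
  · calc f = ε⁻¹ • (∑ i, (g i).1 ^ k - ∑ i, (h i).1 ^ k) := by rw [← hgh, inv_smul_smul₀ hε]
      _ = ∑ i, C ε⁻¹ * (g i).1 ^ k + ∑ i, C (-ε⁻¹) * (h i).1 ^ k := by
        simp only [smul_eq_C_mul, mul_sub, Finset.mul_sum, C_neg, neg_mul,
          Finset.sum_neg_distrib, ← sub_eq_add_neg]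
      _ = _ := by simp only [Fin.sum_univ_add, Fin.append_left, Fin.append_right]

end Forms

theorem stmt_12_general {𝕜 : Type*} [NontriviallyNormedField 𝕜] [CompleteSpace 𝕜] [CharZero 𝕜]
    (k d : ℕ) (hk : 1 ≤ k) (n : ℕ) :
    ((∀ a : 𝕜, ∃ z, z ^ k = a) →
      ∀ f : MvPolynomial (Fin (n + 1)) 𝕜, f.IsHomogeneous (k * d) →
        ∃ r ≤ 2 * k ^ n, ∃ g : Fin r → MvPolynomial (Fin (n + 1)) 𝕜,
          (∀ i, (g i).IsHomogeneous d) ∧ f = ∑ i, g i ^ k) ∧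
    (∀ f : MvPolynomial (Fin (n + 1)) 𝕜, f.IsHomogeneous (k * d) →
      ∃ r ≤ 2 * k ^ n, ∃ (c : Fin r → 𝕜) (g : Fin r → MvPolynomial (Fin (n + 1)) 𝕜),
        (∀ i, (g i).IsHomogeneous d) ∧ f = ∑ i, C (c i) * g i ^ k) := by
  have linearCombination {f : MvPolynomial (Fin (n + 1)) 𝕜} (hf : f.IsHomogeneous (k * d)) :=
    exists_eq_sum_C_mul_pow (Nat.one_le_iff_ne_zero.1 hk) hf
  refine ⟨fun exists_root f hf => ?_, fun f hf => ⟨_, le_rfl, linearCombination hf⟩⟩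
  obtain ⟨c, g, hg, rfl⟩ := linearCombination hf
  choose z hz using fun i => exists_root (c i)
  refine ⟨_, le_rfl, fun i => C (z i) * g i, fun i => ?_, ?_⟩
  · simpa using (isHomogeneous_C _ (z i)).mul (hg i)
  · simp only [mul_pow, ← C_pow, hz]

/-- Every complex form of degree `kd` in `n+1` variables is a sum of
at most `2kⁿ` k-th powers of degree-`d` forms, and every real form of degree `kd` in
`n+1` variables is a real linear combination (possibly with negative coefficients) of at
most `2kⁿ` k-th powers of real degree-`d` forms. -/
theorem stmt_12 (k d : ℕ) (hk : 1 ≤ k) (hd : 1 ≤ d) (n : ℕ) :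
    (∀ f : MvPolynomial (Fin (n + 1)) ℂ, f.IsHomogeneous (k * d) →
      ∃ r ≤ 2 * k ^ n, ∃ g : Fin r → MvPolynomial (Fin (n + 1)) ℂ,
        (∀ i, (g i).IsHomogeneous d) ∧ f = ∑ i, g i ^ k) ∧
    (∀ f : MvPolynomial (Fin (n + 1)) ℝ, f.IsHomogeneous (k * d) →
      ∃ r ≤ 2 * k ^ n, ∃ (c : Fin r → ℝ) (g : Fin r → MvPolynomial (Fin (n + 1)) ℝ),
        (∀ i, (g i).IsHomogeneous d) ∧ f = ∑ i, C (c i) * g i ^ k) :=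
  ⟨(stmt_12_general k d hk n).1 fun a => IsAlgClosed.exists_pow_nat_eq a hk,
    (stmt_12_general k d hk n).2⟩
end
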